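/- Let x ∈ [0,1] be irrational with convergents p_m/q_m and partial quotients a_m, and let n ∈ ℕ. Let m and r be the unique integers with (r+1)q_m + q_{m−1} ≤ n+1 < (r+2)q_m + q_{m−1}, m ≥ 0, and 0 ≤ r < a_{m+1}. Then the interval of the Farey partition F_n containing x is the open interval with endpoints p_m/q_m and ((r+1)p_m + p_{m−1})/((r+1)q_m + q_{m−1}) (the former being the left endpoint if m is even and the right endpoint if m is odd). In particular, |I_n^ℱ(x)| = 1/(((r+1)q_m + q_{m−1}) q_m). -/

import Mathlib

open MeasureTheory Filter Set

noncomputable section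

/-- The set `E_n^ℱ` of endpoints of the Farey partition `F_n`: rationals of `[0,1]` whose
denominator in lowest terms is at most `n+1`. -/
def fareyPts (n : ℕ) : Set ℝ :=
  {x | ∃ p q : ℕ, q ≠ 0 ∧ q ≤ n + 1 ∧ p ≤ q ∧ Nat.gcd p q = 1 ∧ x = (p : ℝ) / q}

/-- The interval `I_n^ℱ(x)` of the Farey partition `F_n` containing `x`: the open interval
between the largest Farey point of order `n+1` below `x` and the smallest one above `x`. -/
def fareyInterval (n : ℕ) (x : ℝ) : Set ℝ :=
  Set.Ioo (sSup (fareyPts n ∩ Set.Iio x)) (sInf (fareyPts n ∩ Set.Ioi x))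

/-- The partial quotient `a_{m+1}` of the continued fraction expansion of `x ∈ (0,1)`,
obtained from the Gauss map: `cfa x m = ⌊1 / T_G^m x⌋` where `T_G y = {1/y}`. -/
def cfa (x : ℝ) (m : ℕ) : ℕ := ⌊1 / ((fun y => Int.fract (1 / y))^[m] x)⌋₊

/-- Numerators of the convergents of `x`, shifted by one: `cfp x (m+1) = p_m`, with
`p_{-1} = 1`, `p_0 = 0`, `p_{m+1} = a_{m+1} p_m + p_{m-1}`. -/
def cfp (x : ℝ) : ℕ → ℕ
  | 0 => 1
  | 1 => 0
  | m + 2 => cfa x m * cfp x (m + 1) + cfp x m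

/-- Denominators of the convergents of `x`, shifted by one: `cfq x (m+1) = q_m`, with
`q_{-1} = 0`, `q_0 = 1`, `q_{m+1} = a_{m+1} q_m + q_{m-1}`. -/
def cfq (x : ℝ) : ℕ → ℕ
  | 0 => 0
  | 1 => 1
  | m + 2 => cfa x m * cfq x (m + 1) + cfq x m

/-- The fundamental interval `I_n^{𝒞ℱ}(x)` of depth `n` of the continued fraction
expansion: the open interval with endpoints `p_n/q_n` and `(p_n+p_{n-1})/(q_n+q_{n-1})`,
the former being the left endpoint iff `n` is even. -/
def cfInterval (x : ℝ) (n : ℕ) : Set ℝ :=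
  if Even n then
    Set.Ioo ((cfp x (n + 1) : ℝ) / (cfq x (n + 1) : ℝ))
      (((cfp x (n + 1) + cfp x n : ℕ) : ℝ) / ((cfq x (n + 1) + cfq x n : ℕ) : ℝ))
  else
    Set.Ioo (((cfp x (n + 1) + cfp x n : ℕ) : ℝ) / ((cfq x (n + 1) + cfq x n : ℕ) : ℝ))
      ((cfp x (n + 1) : ℝ) / (cfq x (n + 1) : ℝ))

/-- The Lochs index `L_n(x, 𝒞ℱ, ℱ)` from the continued fraction sequence of partitions to
the Farey sequence of partitions. -/
def lochsCFtoF (x : ℝ) (n : ℕ) : ℕ :=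
  sSup {ℓ : ℕ | cfInterval x n ⊆ fareyInterval ℓ x}

/-- The Lochs index `L_n(x, ℱ, 𝒞ℱ)` from the Farey sequence of partitions to the
continued fraction sequence of partitions. -/
def lochsFtoCF (x : ℝ) (n : ℕ) : ℕ :=
  sSup {ℓ : ℕ | fareyInterval n x ⊆ cfInterval x ℓ}

/-!
Write `P/Q = p_m/q_m`, `P'/Q' = ((r+1)p_m + p_{m-1})/((r+1)q_m + q_{m-1})` and `t = T_G^m x`.
Unfolding the Gauss map gives `x = (p_m + t p_{m-1})/(q_m + t q_{m-1})`, so that `x Q - P` and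
`P' - x Q'` are positive multiples of `(-1)^m t` and `(-1)^m (1 - (r+1)t)`. Here `(r+1)t ≤ 1`
because `r < a_{m+1}`, with equality only if `x` is the Farey point `P'/Q'`; hence `x` lies strictly
between the two fractions. Their determinant is `±1`, and a fraction strictly between two such
fractions has denominator at least `Q + Q' > n + 1`, so no endpoint of `F_n` separates them.
-/

/-- Farey neighbours `a / b < c / d`: fractions with positive denominators and determinant
`c b - a d = 1`, the latter written without subtraction in `ℕ`. -/
structure IsFareyPair (a b c d : ℕ) : Prop where
  left_den_pos : 0 < b
  right_den_pos : 0 < d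
  det : c * b = a * d + 1

namespace IsFareyPair

variable {a b c d n : ℕ} {x : ℝ}

lemma coprime_left (h : IsFareyPair a b c d) : Nat.Coprime a b := by
  have hdet : (c : ℤ) * b = a * d + 1 := mod_cast h.det
  exact Nat.isCoprime_iff_coprime.mp ⟨-d, c, by linear_combination hdet⟩

lemma coprime_right (h : IsFareyPair a b c d) : Nat.Coprime c d := by
  have hdet : (c : ℤ) * b = a * d + 1 := mod_cast h.det
  exact Nat.isCoprime_iff_coprime.mp ⟨b, -a, by linear_combination hdet⟩

lemma right_num_le_den (h : IsFareyPair a b c d) (hab : a < b) : c ≤ d := by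
  refine Nat.le_of_mul_le_mul_right ?_ h.left_den_pos
  calc c * b = a * d + 1 := h.det
    _ ≤ a * d + d := by gcongr; exact h.right_den_pos
    _ = (a + 1) * d := by ring
    _ ≤ b * d := by gcongr; exact hab
    _ = d * b := mul_comm b d

lemma add_le_den_of_between (h : IsFareyPair a b c d) {p q : ℕ} (hq : 0 < q)
    (hap : (a / b : ℝ) < p / q) (hpc : (p / q : ℝ) < c / d) : b + d ≤ q := by
  have hb : (0 : ℝ) < b := mod_cast h.left_den_pos
  have hd : (0 : ℝ) < d := mod_cast h.right_den_pos
  have hq' : (0 : ℝ) < q := mod_cast hq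
  rw [div_lt_div_iff₀ hb hq'] at hap
  rw [div_lt_div_iff₀ hq' hd] at hpc
  have hleft : (1 : ℤ) ≤ p * b - a * q := by
    have : (a : ℤ) * q < p * b := mod_cast hap
    omega
  have hright : (1 : ℤ) ≤ c * q - p * d := by
    have : (p : ℤ) * d < c * q := mod_cast hpc
    omega
  have hdet : (c : ℤ) * b = a * d + 1 := mod_cast h.det
  have hsum : (b : ℤ) + d ≤ q :=
    calc (b : ℤ) + d = b * 1 + d * 1 := by ring
      _ ≤ b * (c * q - p * d) + d * (p * b - a * q) := by gcongr
      _ = q := by linear_combination (q : ℤ) * hdet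
  exact mod_cast hsum

lemma isGreatest_fareyPts_inter_Iio (h : IsFareyPair a b c d) (hx : x ≤ 1) (hb : b ≤ n + 1)
    (hn : n + 1 < b + d) (hax : (a / b : ℝ) < x) (hxc : x < c / d) :
    IsGreatest (fareyPts n ∩ Iio x) (a / b) := by
  have hab : a ≤ b := by
    have := (div_le_one (Nat.cast_pos.mpr h.left_den_pos)).mp (hax.le.trans hx)
    exact mod_cast this
  refine ⟨⟨⟨a, b, h.left_den_pos.ne', hb, hab, h.coprime_left, rfl⟩, hax⟩, ?_⟩
  rintro _ ⟨⟨p, q, hq, hqn, -, -, rfl⟩, hpx⟩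
  by_contra! hap
  have := h.add_le_den_of_between (Nat.pos_of_ne_zero hq) hap (lt_trans hpx hxc)
  omega

lemma isLeast_fareyPts_inter_Ioi (h : IsFareyPair a b c d) (hx : x ≤ 1) (hd : d ≤ n + 1)
    (hn : n + 1 < b + d) (hax : (a / b : ℝ) < x) (hxc : x < c / d) :
    IsLeast (fareyPts n ∩ Ioi x) (c / d) := by
  have hab : a < b := by
    have := (div_lt_one (Nat.cast_pos.mpr h.left_den_pos)).mp (hax.trans_le hx)
    exact mod_cast this
  refine ⟨⟨⟨c, d, h.right_den_pos.ne', hd, h.right_num_le_den hab, h.coprime_right, rfl⟩, hxc⟩, ?_⟩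
  rintro _ ⟨⟨p, q, hq, hqn, -, -, rfl⟩, hxp⟩
  by_contra! hpc
  have := h.add_le_den_of_between (Nat.pos_of_ne_zero hq) (lt_trans hax hxp) hpc
  omega

lemma fareyInterval_eq (h : IsFareyPair a b c d) (hx : x ≤ 1) (hb : b ≤ n + 1) (hd : d ≤ n + 1)
    (hn : n + 1 < b + d) (hax : (a / b : ℝ) < x) (hxc : x < c / d) :
    fareyInterval n x = Ioo (a / b : ℝ) (c / d) := by
  rw [fareyInterval, (h.isGreatest_fareyPts_inter_Iio hx hb hn hax hxc).csSup_eq,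
    (h.isLeast_fareyPts_inter_Ioi hx hd hn hax hxc).csInf_eq]

lemma toReal_volume_Ioo (h : IsFareyPair a b c d) :
    (volume (Ioo (a / b : ℝ) (c / d))).toReal = 1 / (b * d) := by
  have hb : (0 : ℝ) < b := mod_cast h.left_den_pos
  have hd : (0 : ℝ) < d := mod_cast h.right_den_pos
  have hdet : (c : ℝ) * b = a * d + 1 := mod_cast h.det
  have hlen : (c / d - a / b : ℝ) = 1 / (b * d) := by
    field_simp
    linear_combination hdet
  rw [Real.volume_Ioo, hlen, ENNReal.toReal_ofReal (by positivity)]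

end IsFareyPair

/-- The Gauss map `T_G y = {1/y}`, whose iterates generate the partial quotients `cfa`.
With `1 / 0 = 0` it fixes `0`, so the orbit of a rational number is eventually `0`. -/
def gaussMap (y : ℝ) : ℝ := Int.fract (1 / y)

/-- The numerator `s p_m + p_{m-1}` of the `s`-th semiconvergent of `x` after `p_m/q_m`. -/
def semiconvNum (x : ℝ) (m s : ℕ) : ℕ := s * cfp x (m + 1) + cfp x m

/-- The denominator `s q_m + q_{m-1}` of the `s`-th semiconvergent of `x` after `p_m/q_m`. -/
def semiconvDen (x : ℝ) (m s : ℕ) : ℕ := s * cfq x (m + 1) + cfq x m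

section ContinuedFraction

variable {x : ℝ} {m n s : ℕ}

lemma iterate_gaussMap_mem_Icc (hx : x ∈ Icc (0 : ℝ) 1) (m : ℕ) :
    gaussMap^[m] x ∈ Icc (0 : ℝ) 1 := by
  have hmaps : MapsTo gaussMap (Icc 0 1) (Icc 0 1) :=
    fun _ _ ↦ ⟨Int.fract_nonneg _, (Int.fract_lt_one _).le⟩
  exact hmaps.iterate m hx

lemma iterate_gaussMap_ne_zero_of_succ (h : gaussMap^[m + 1] x ≠ 0) : gaussMap^[m] x ≠ 0 := by
  contrapose! h
  simp [Function.iterate_succ_apply', h, gaussMap]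

lemma iterate_gaussMap_succ (hx : x ∈ Icc (0 : ℝ) 1) (m : ℕ) :
    gaussMap^[m + 1] x = 1 / gaussMap^[m] x - cfa x m := by
  have ht : 0 ≤ 1 / gaussMap^[m] x := one_div_nonneg.mpr (iterate_gaussMap_mem_Icc hx m).1
  rw [Function.iterate_succ_apply']
  change Int.fract (1 / gaussMap^[m] x) = _ - (⌊1 / gaussMap^[m] x⌋₊ : ℝ)
  rw [Int.fract, natCast_floor_eq_intCast_floor ht]

lemma iterate_gaussMap_ne_zero_of_cfa_pos (h : 0 < cfa x m) : gaussMap^[m] x ≠ 0 := by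
  contrapose! h
  change ⌊1 / gaussMap^[m] x⌋₊ ≤ 0
  simp [h]

lemma cfa_pos (hx : x ∈ Icc (0 : ℝ) 1) (ht : gaussMap^[m] x ≠ 0) : 0 < cfa x m := by
  obtain ⟨ht0, ht1⟩ := iterate_gaussMap_mem_Icc hx m
  exact Nat.floor_pos.mpr ((one_le_div (ht0.lt_of_ne' ht)).mpr ht1)

lemma mul_iterate_gaussMap_le_one (hx : x ∈ Icc (0 : ℝ) 1) (hs : s ≤ cfa x m) :
    s * gaussMap^[m] x ≤ 1 := by
  have ht := (iterate_gaussMap_mem_Icc hx m).1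
  calc s * gaussMap^[m] x ≤ 1 / gaussMap^[m] x * gaussMap^[m] x := by
        gcongr
        exact (Nat.cast_le.mpr hs).trans (Nat.floor_le (one_div_nonneg.mpr ht))
    _ ≤ 1 := by rw [one_div]; exact inv_mul_le_one

lemma cfq_succ_pos (hx : x ∈ Icc (0 : ℝ) 1) (ht : gaussMap^[m] x ≠ 0) : 0 < cfq x (m + 1) := by
  induction m with
  | zero => exact one_pos
  | succ m ih =>
    have ht' := iterate_gaussMap_ne_zero_of_succ ht
    exact Nat.add_pos_left (Nat.mul_pos (cfa_pos hx ht') (ih ht')) _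

lemma cfp_mul_cfq_succ_sub (x : ℝ) (m : ℕ) :
    (cfp x m * cfq x (m + 1) - cfp x (m + 1) * cfq x m : ℤ) = (-1) ^ m := by
  induction m with
  | zero => simp [cfp, cfq]
  | succ m ih =>
    simp only [cfp, cfq, Nat.cast_add, Nat.cast_mul, pow_succ]
    linear_combination -ih

lemma mul_cfq_add_iterate_gaussMap_mul (hx : x ∈ Icc (0 : ℝ) 1) (ht : gaussMap^[m] x ≠ 0) :
    x * (cfq x (m + 1) + gaussMap^[m] x * cfq x m) =
      cfp x (m + 1) + gaussMap^[m] x * cfp x m := by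
  induction m with
  | zero => simp [cfp, cfq]
  | succ m ih =>
    have ht' := iterate_gaussMap_ne_zero_of_succ ht
    simp only [iterate_gaussMap_succ hx, cfp, cfq, Nat.cast_add, Nat.cast_mul]
    field_simp
    linear_combination ih ht'

lemma semiconvNum_mul_cfq_sub (x : ℝ) (m s : ℕ) :
    (semiconvNum x m s * cfq x (m + 1) - cfp x (m + 1) * semiconvDen x m s : ℤ) = (-1) ^ m := by
  simp only [semiconvNum, semiconvDen, Nat.cast_add, Nat.cast_mul]
  linear_combination cfp_mul_cfq_succ_sub x m

lemma coprime_semiconvNum_semiconvDen (x : ℝ) (m s : ℕ) :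
    Nat.Coprime (semiconvNum x m s) (semiconvDen x m s) := by
  refine Nat.isCoprime_iff_coprime.mp ⟨(-1) ^ m * cfq x (m + 1), -((-1) ^ m * cfp x (m + 1)), ?_⟩
  have hsq : ((-1) ^ m * (-1) ^ m : ℤ) = 1 := by rw [← mul_pow]; simp
  linear_combination (-1) ^ m * semiconvNum_mul_cfq_sub x m s + hsq

lemma cfq_add_iterate_gaussMap_mul_pos (hx : x ∈ Icc (0 : ℝ) 1) (ht : gaussMap^[m] x ≠ 0) :
    0 < cfq x (m + 1) + gaussMap^[m] x * cfq x m := by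
  have hq : (0 : ℝ) < cfq x (m + 1) := mod_cast cfq_succ_pos hx ht
  have ht0 := (iterate_gaussMap_mem_Icc hx m).1
  positivity

lemma mul_cfq_sub_cfp_mul (hx : x ∈ Icc (0 : ℝ) 1) (ht : gaussMap^[m] x ≠ 0) :
    (x * cfq x (m + 1) - cfp x (m + 1)) * (cfq x (m + 1) + gaussMap^[m] x * cfq x m) =
      (-1) ^ m * gaussMap^[m] x := by
  have hdet : (cfp x m * cfq x (m + 1) - cfp x (m + 1) * cfq x m : ℝ) = (-1) ^ m :=
    mod_cast cfp_mul_cfq_succ_sub x m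
  linear_combination (cfq x (m + 1) : ℝ) * mul_cfq_add_iterate_gaussMap_mul hx ht +
    gaussMap^[m] x * hdet

lemma semiconvNum_sub_mul_semiconvDen_mul (hx : x ∈ Icc (0 : ℝ) 1) (ht : gaussMap^[m] x ≠ 0)
    (s : ℕ) :
    (semiconvNum x m s - x * semiconvDen x m s) *
        (cfq x (m + 1) + gaussMap^[m] x * cfq x m) =
      (-1) ^ m * (1 - s * gaussMap^[m] x) := by
  have hdet : (cfp x m * cfq x (m + 1) - cfp x (m + 1) * cfq x m : ℝ) = (-1) ^ m :=
    mod_cast cfp_mul_cfq_succ_sub x m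
  simp only [semiconvNum, semiconvDen, Nat.cast_add, Nat.cast_mul]
  linear_combination (1 - s * gaussMap^[m] x) * hdet -
    (s * cfq x (m + 1) + cfq x m : ℝ) * mul_cfq_add_iterate_gaussMap_mul hx ht

lemma neg_one_pow_mul_mul_cfq_sub_cfp_pos (hx : x ∈ Icc (0 : ℝ) 1) (ht : gaussMap^[m] x ≠ 0) :
    0 < (-1) ^ m * (x * cfq x (m + 1) - cfp x (m + 1)) := by
  refine pos_of_mul_pos_left ?_ (cfq_add_iterate_gaussMap_mul_pos hx ht).le
  rw [mul_assoc, mul_cfq_sub_cfp_mul hx ht, ← mul_assoc, ← mul_pow]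
  simpa using (iterate_gaussMap_mem_Icc hx m).1.lt_of_ne' ht

lemma neg_one_pow_mul_semiconvNum_sub_mul_semiconvDen_pos (hx : x ∈ Icc (0 : ℝ) 1)
    (ht : gaussMap^[m] x ≠ 0) (hst : s * gaussMap^[m] x < 1) :
    0 < (-1) ^ m * (semiconvNum x m s - x * semiconvDen x m s) := by
  refine pos_of_mul_pos_left ?_ (cfq_add_iterate_gaussMap_mul_pos hx ht).le
  rw [mul_assoc, semiconvNum_sub_mul_semiconvDen_mul hx ht, ← mul_assoc, ← mul_pow]
  simpa using hst

lemma semiconvDen_succ (x : ℝ) (m s : ℕ) :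
    semiconvDen x m (s + 1) = cfq x (m + 1) + semiconvDen x m s := by
  simp only [semiconvDen]
  ring

lemma cfq_le_semiconvDen_succ (x : ℝ) (m s : ℕ) : cfq x (m + 1) ≤ semiconvDen x m (s + 1) :=
  semiconvDen_succ x m s ▸ Nat.le_add_right _ _

lemma semiconvDen_succ_pos (h : 0 < cfq x (m + 1)) (s : ℕ) : 0 < semiconvDen x m (s + 1) :=
  h.trans_le (cfq_le_semiconvDen_succ x m s)

lemma mul_iterate_gaussMap_lt_one {r : ℕ} (hx : x ∈ Icc (0 : ℝ) 1) (hxn : x ∉ fareyPts n)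
    (hr : r < cfa x m) (hn : semiconvDen x m (r + 1) ≤ n + 1) :
    (r + 1 : ℕ) * gaussMap^[m] x < 1 := by
  refine (mul_iterate_gaussMap_le_one hx hr).lt_of_ne fun hst ↦ hxn ?_
  have ht := iterate_gaussMap_ne_zero_of_cfa_pos (Nat.zero_lt_of_lt hr)
  have hden := semiconvDen_succ_pos (cfq_succ_pos hx ht) r
  have hden' : (0 : ℝ) < semiconvDen x m (r + 1) := mod_cast hden
  have herr := semiconvNum_sub_mul_semiconvDen_mul hx ht (r + 1)
  rw [hst, sub_self, mul_zero, mul_eq_zero,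
    or_iff_left (cfq_add_iterate_gaussMap_mul_pos hx ht).ne', sub_eq_zero] at herr
  refine ⟨_, _, hden.ne', hn, ?_, coprime_semiconvNum_semiconvDen x m (r + 1),
    (eq_div_iff hden'.ne').mpr herr.symm⟩
  have hle : (semiconvNum x m (r + 1) : ℝ) ≤ semiconvDen x m (r + 1) :=
    herr ▸ mul_le_of_le_one_left hden'.le hx.2
  exact mod_cast hle

lemma isFareyPair_convergent_semiconvergent (hm : Even m) (hq : 0 < cfq x (m + 1)) (r : ℕ) :
    IsFareyPair (cfp x (m + 1)) (cfq x (m + 1))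
      (semiconvNum x m (r + 1)) (semiconvDen x m (r + 1)) := by
  refine ⟨hq, semiconvDen_succ_pos hq r, ?_⟩
  have hdet := semiconvNum_mul_cfq_sub x m (r + 1)
  rw [hm.neg_one_pow] at hdet
  zify
  linear_combination hdet

lemma isFareyPair_semiconvergent_convergent (hm : Odd m) (hq : 0 < cfq x (m + 1)) (r : ℕ) :
    IsFareyPair (semiconvNum x m (r + 1)) (semiconvDen x m (r + 1))
      (cfp x (m + 1)) (cfq x (m + 1)) := by
  refine ⟨semiconvDen_succ_pos hq r, hq, ?_⟩
  have hdet := semiconvNum_mul_cfq_sub x m (r + 1)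
  rw [hm.neg_one_pow] at hdet
  zify
  linear_combination -hdet

end ContinuedFraction

lemma notMem_fareyPts_of_irrational {x : ℝ} (hx : Irrational x) (n : ℕ) : x ∉ fareyPts n := by
  rintro ⟨p, q, -, -, -, -, rfl⟩
  exact hx ⟨p / q, by push_cast; rfl⟩

theorem farey_interval_eq_general (x : ℝ) (hx : x ∈ Icc (0 : ℝ) 1) (n m r : ℕ)
    (hxn : x ∉ fareyPts n)
    (h1 : semiconvDen x m (r + 1) ≤ n + 1)
    (h2 : n + 1 < semiconvDen x m (r + 2))
    (hr : r < cfa x m) :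
    fareyInterval n x =
      (if Even m then
        Ioo (cfp x (m + 1) / cfq x (m + 1) : ℝ)
          (semiconvNum x m (r + 1) / semiconvDen x m (r + 1))
      else
        Ioo (semiconvNum x m (r + 1) / semiconvDen x m (r + 1) : ℝ)
          (cfp x (m + 1) / cfq x (m + 1))) ∧
    (volume (fareyInterval n x)).toReal =
      1 / (semiconvDen x m (r + 1) * cfq x (m + 1)) := by
  have ht := iterate_gaussMap_ne_zero_of_cfa_pos (Nat.zero_lt_of_lt hr)
  have hq := cfq_succ_pos hx ht
  have hqR : (0 : ℝ) < cfq x (m + 1) := mod_cast hq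
  have hdenR : (0 : ℝ) < semiconvDen x m (r + 1) := mod_cast semiconvDen_succ_pos hq r
  have hqn : cfq x (m + 1) ≤ n + 1 := (cfq_le_semiconvDen_succ x m r).trans h1
  have hn : n + 1 < cfq x (m + 1) + semiconvDen x m (r + 1) := by rwa [← semiconvDen_succ]
  have hconv := neg_one_pow_mul_mul_cfq_sub_cfp_pos hx ht
  have hsemi := neg_one_pow_mul_semiconvNum_sub_mul_semiconvDen_pos hx ht
    (mul_iterate_gaussMap_lt_one hx hxn hr h1)
  rcases Nat.even_or_odd m with hm | hm
  · rw [hm.neg_one_pow, one_mul, sub_pos] at hconv hsemi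
    have h := isFareyPair_convergent_semiconvergent hm hq r
    have hI := h.fareyInterval_eq hx.2 hqn h1 hn
      ((div_lt_iff₀ hqR).mpr hconv) ((lt_div_iff₀ hdenR).mpr hsemi)
    rw [if_pos hm, hI, h.toReal_volume_Ioo, mul_comm (cfq x (m + 1) : ℝ)]
    exact ⟨rfl, rfl⟩
  · rw [hm.neg_one_pow, neg_one_mul, neg_sub, sub_pos] at hconv hsemi
    have h := isFareyPair_semiconvergent_convergent hm hq r
    have hI := h.fareyInterval_eq hx.2 h1 hqn (hn.trans_eq (add_comm _ _))
      ((div_lt_iff₀ hdenR).mpr hsemi) ((lt_div_iff₀ hqR).mpr hconv)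
    rw [if_neg (Nat.not_even_iff_odd.mpr hm), hI, h.toReal_volume_Ioo]
    exact ⟨rfl, rfl⟩

/-- Explicit description of the Farey interval of depth `n` containing an irrational `x`.
Here `q_m = cfq x (m+1)`, `q_{m-1} = cfq x m`, `p_m = cfp x (m+1)`, `p_{m-1} = cfp x m`
and `a_{m+1} = cfa x m`. -/
theorem farey_interval_eq (x : ℝ) (hx : x ∈ Set.Icc (0 : ℝ) 1) (hirr : Irrational x)
    (n m r : ℕ)
    (h1 : (r + 1) * cfq x (m + 1) + cfq x m ≤ n + 1)
    (h2 : n + 1 < (r + 2) * cfq x (m + 1) + cfq x m)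
    (hr : r < cfa x m) :
    fareyInterval n x =
      (if Even m then
        Set.Ioo ((cfp x (m + 1) : ℝ) / (cfq x (m + 1) : ℝ))
          ((((r + 1) * cfp x (m + 1) + cfp x m : ℕ) : ℝ) /
            (((r + 1) * cfq x (m + 1) + cfq x m : ℕ) : ℝ))
      else
        Set.Ioo ((((r + 1) * cfp x (m + 1) + cfp x m : ℕ) : ℝ) /
            (((r + 1) * cfq x (m + 1) + cfq x m : ℕ) : ℝ))
          ((cfp x (m + 1) : ℝ) / (cfq x (m + 1) : ℝ))) ∧
    (volume (fareyInterval n x)).toReal =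
      1 / ((((r + 1) * cfq x (m + 1) + cfq x m : ℕ) : ℝ) * (cfq x (m + 1) : ℝ)) :=
  farey_interval_eq_general x hx n m r (notMem_fareyPts_of_irrational hirr n) h1 h2 hr
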